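/- Let γ > 1 and l be real, let T ∈ (0, ∞], and let (ρ, U, p) with U = (u₁, u₂) be continuously differentiable functions on [0,T) × ℝ² such that ρ(t,·) and p(t,·) are supported in a fixed compact set K ⊂ ℝ² for every t, and which solve the 2D rotating compressible Euler system: ρ(∂ₜU + (U·∇)U + l·L·U) + ∇p = 0, ∂ₜρ + div(ρU) = 0, ∂ₜp + U·∇p + γ p div U = 0, where L·U = (−u₂, u₁). Define G(t) = (1/2)∫ρ|x|² dx, F₁(t) = ∫ρ(u₁x₁ + u₂x₂) dx, F₂(t) = ∫ρ(u₁x₂ − u₂x₁) dx, E_k(t) = (1/2)∫ρ|U|² dx, E_p(t) = (1/(γ−1))∫p dx (all integrals over ℝ²). Then for all t ∈ [0,T): G'(t) = F₁(t), F₂'(t) = l·F₁(t), and F₁'(t) = 2(γ−1)E_p(t) + 2E_k(t) − l·F₂(t). -/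

import Mathlib

open MeasureTheory

/-! By mass conservation, `d/dt ∫ ρ f = ∫ ρ Df/Dt` for every `C¹` quantity `f`, where `D/Dt` is the
material derivative. For `f = |x|²` this gives the moment of inertia. For `f = U · X` with a test
vector field `X`, the momentum equation replaces `ρ DU/Dt` by the pressure gradient and the
Coriolis force, and the pressure gradient integrates by parts to `∫ p div X`. The fields `X = x`,
with `div X = 2`, and `X = x⊥`, which is divergence free, give the radial and the angular momentum.
-/

open Filter Set Topology

section Slices

variable {𝕜 E F G : Type*} [NontriviallyNormedField 𝕜] [NormedAddCommGroup E] [NormedSpace 𝕜 E]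
  [NormedAddCommGroup F] [NormedSpace 𝕜 F] [NormedAddCommGroup G] [NormedSpace 𝕜 G]

theorem contDiff_slice {n : WithTop ℕ∞} {A : Set E} {f : E × F → G}
    (hf : ContDiffOn 𝕜 n f (A ×ˢ univ)) {a : E} (ha : a ∈ A) :
    ContDiff 𝕜 n fun z => f (a, z) := by
  have hmaps : MapsTo (fun z : F => (a, z)) univ (A ×ˢ univ) := fun z _ => ⟨ha, mem_univ z⟩
  exact contDiffOn_univ.1 (hf.comp (contDiff_prodMk_right a).contDiffOn hmaps)

theorem hasDerivWithinAt_fst_slice {A : Set 𝕜} {f : 𝕜 × F → G} {a : 𝕜} {z : F}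
    (hf : DifferentiableWithinAt 𝕜 f (A ×ˢ univ) (a, z)) :
    HasDerivWithinAt (fun s => f (s, z)) (fderivWithin 𝕜 f (A ×ˢ univ) (a, z) (1, 0)) A a := by
  have hmaps : MapsTo (fun s => (s, z)) A (A ×ˢ univ) := fun _ hs => ⟨hs, mem_univ z⟩
  exact hf.hasFDerivWithinAt.comp_hasDerivWithinAt a
    ((hasDerivWithinAt_id a A).prodMk (hasDerivWithinAt_const a A z)) hmaps

theorem hasDerivAt_fst_slice {f : 𝕜 × F → G} {a : 𝕜} {z : F}
    (hf : DifferentiableAt 𝕜 f (a, z)) :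
    HasDerivAt (fun s => f (s, z)) (fderiv 𝕜 f (a, z) (1, 0)) a :=
  hf.hasFDerivAt.comp_hasDerivAt a ((hasDerivAt_id a).prodMk (hasDerivAt_const a z))

theorem hasDerivAt_snd_slice {f : E × 𝕜 → G} {z : E} {a : 𝕜}
    (hf : DifferentiableAt 𝕜 f (z, a)) :
    HasDerivAt (fun s => f (z, s)) (fderiv 𝕜 f (z, a) (0, 1)) a :=
  hf.hasFDerivAt.comp_hasDerivAt a ((hasDerivAt_const a z).prodMk (hasDerivAt_id a))

end Slices

theorem exists_eventually_forall_norm_le {X Y G : Type*} [TopologicalSpace X] [TopologicalSpace Y]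
    [SeminormedAddCommGroup G] {A : Set X} {B : Set Y} (hB : IsCompact B) {g : X × Y → G}
    (hg : ContinuousOn g (A ×ˢ B)) {a : X} (ha : a ∈ A) :
    ∃ C, ∀ᶠ x in 𝓝[A] a, ∀ y ∈ B, ‖g (x, y)‖ ≤ C := by
  obtain ⟨W, hBW, hW, hbdd⟩ :=
    Metric.exists_isOpen_isBounded_image_inter_of_isCompact_of_continuousOn
      (isCompact_singleton.prod hB) (prod_mono_left (singleton_subset_iff.2 ha)) hg
  obtain ⟨C, hC⟩ := hbdd.exists_norm_le
  obtain ⟨V, V', hV, -, haV, hBV', hVW⟩ := generalized_tube_lemma isCompact_singleton hB hW hBW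
  refine ⟨C, ?_⟩
  filter_upwards [inter_mem_nhdsWithin A (hV.mem_nhds (singleton_subset_iff.1 haV))]
    with x hx y hy
  exact hC _ (mem_image_of_mem g ⟨hVW ⟨hx.2, hBV' hy⟩, hx.1, hy⟩)

section IntegralCalculus

variable {E F : Type*} [NormedAddCommGroup E] [NormedSpace ℝ E] [NormedAddCommGroup F]
  [NormedSpace ℝ F] {J : Set ℝ} {K : Set E} {f : ℝ × E → F} {t : ℝ}

theorem exists_eventually_forall_norm_slope_le (hJ : Convex ℝ J) (hJd : UniqueDiffOn ℝ J)
    (hK : IsCompact K) (hf : ContDiffOn ℝ 1 f (J ×ˢ univ)) (ht : t ∈ J) :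
    ∃ C, ∀ᶠ s in 𝓝[J] t, ∀ z ∈ K, ‖slope (fun τ => f (τ, z)) t s‖ ≤ C := by
  have hcont : ContinuousOn (fun q => fderivWithin ℝ f (J ×ˢ univ) q (1, 0)) (J ×ˢ K) :=
    ((hf.continuousOn_fderivWithin (hJd.prod uniqueDiffOn_univ) le_rfl).clm_apply
      continuousOn_const).mono (prod_mono_right (subset_univ K))
  obtain ⟨C, hC⟩ := exists_eventually_forall_norm_le hK hcont ht
  obtain ⟨ε, hε, hball⟩ := Metric.mem_nhdsWithin_iff.1 hC
  refine ⟨C, ?_⟩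
  filter_upwards [inter_mem_nhdsWithin J (Metric.ball_mem_nhds t hε)] with s hs z hz
  have hlip : ‖f (s, z) - f (t, z)‖ ≤ C * ‖s - t‖ :=
    ((convex_ball t ε).inter hJ).norm_image_sub_le_of_norm_hasDerivWithin_le
      (fun r hr => (hasDerivWithinAt_fst_slice
        (hf.differentiableOn one_ne_zero (r, z) ⟨hr.2, mem_univ z⟩)).mono inter_subset_right)
      (fun r hr => hball hr z hz) ⟨Metric.mem_ball_self hε, ht⟩ ⟨hs.2, hs.1⟩
  have hC_nonneg : 0 ≤ C :=
    (norm_nonneg _).trans (hball ⟨Metric.mem_ball_self hε, ht⟩ z hz)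
  rw [slope_def_module, norm_smul, norm_inv, inv_mul_eq_div]
  exact div_le_of_le_mul₀ (norm_nonneg _) hC_nonneg hlip

variable [MeasurableSpace E] [BorelSpace E] {μ : Measure E}

theorem hasDerivWithinAt_integral_of_contDiffOn [IsFiniteMeasureOnCompacts μ] (hJ : Convex ℝ J)
    (hJd : UniqueDiffOn ℝ J) (hK : IsCompact K) (hf : ContDiffOn ℝ 1 f (J ×ˢ univ))
    (hfK : ∀ s ∈ J, ∀ z ∉ K, f (s, z) = 0) (ht : t ∈ J) :
    HasDerivWithinAt (fun s => ∫ z, f (s, z) ∂μ)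
      (∫ z, derivWithin (fun s => f (s, z)) J t ∂μ) J t := by
  have hint : ∀ s ∈ J, Integrable (fun z => f (s, z)) μ := fun s hs =>
    (contDiff_slice hf hs).continuous.integrable_of_hasCompactSupport
      (HasCompactSupport.intro hK (hfK s hs))
  obtain ⟨C, hC⟩ := exists_eventually_forall_norm_slope_le hJ hJd hK hf ht
  have hle : 𝓝[J \ {t}] t ≤ 𝓝[J] t := nhdsWithin_mono t sdiff_subset
  have hlim : Tendsto (fun s => ∫ z, slope (fun τ => f (τ, z)) t s ∂μ) (𝓝[J \ {t}] t)
      (𝓝 (∫ z, derivWithin (fun s => f (s, z)) J t ∂μ)) := by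
    apply tendsto_integral_filter_of_dominated_convergence (K.indicator fun _ => C)
    · filter_upwards [hle self_mem_nhdsWithin] with s hs
      simp only [slope_def_module]
      exact (((hint s hs).sub (hint t ht)).smul _).aestronglyMeasurable
    · filter_upwards [hle hC, hle self_mem_nhdsWithin] with s hCs hs
      refine Eventually.of_forall fun z => ?_
      by_cases hz : z ∈ K
      · simpa only [indicator_of_mem hz] using hCs z hz
      · simp [slope_def_module, hz, hfK s hs, hfK t ht]
    · exact (integrable_indicator_iff hK.measurableSet).2
        (integrableOn_const hK.measure_lt_top.ne)
    · refine Eventually.of_forall fun z => hasDerivWithinAt_iff_tendsto_slope.1 ?_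
      exact (hasDerivWithinAt_fst_slice (hf.differentiableOn one_ne_zero (t, z)
        ⟨ht, mem_univ z⟩)).differentiableWithinAt.hasDerivWithinAt
  rw [hasDerivWithinAt_iff_tendsto_slope]
  refine hlim.congr' ?_
  filter_upwards [hle self_mem_nhdsWithin] with s hs
  simp only [slope_def_module]
  rw [integral_smul, integral_sub (hint s hs) (hint t ht)]

theorem integrable_fderiv_apply [IsFiniteMeasureOnCompacts μ] {g : E → F} (hg : ContDiff ℝ 1 g)
    (hgc : HasCompactSupport g) (v : E) : Integrable (fun z => fderiv ℝ g z v) μ :=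
  ((hg.continuous_fderiv one_ne_zero).clm_apply
    continuous_const).integrable_of_hasCompactSupport (hgc.fderiv_apply ℝ v)

theorem integral_fderiv_apply_eq_zero [FiniteDimensional ℝ E] [μ.IsAddHaarMeasure] {g : E → F}
    (hg : ContDiff ℝ 1 g) (hgc : HasCompactSupport g) (v : E) :
    ∫ z, fderiv ℝ g z v ∂μ = 0 := by
  have hparts := integral_smul_fderiv_eq_neg_fderiv_smul_of_integrable (𝕜 := ℝ) (μ := μ) (v := v)
    (f := fun _ => (1 : ℝ)) (g := g) (by simp) (by simpa using integrable_fderiv_apply hg hgc v)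
    (by simpa using hg.continuous.integrable_of_hasCompactSupport hgc) (by fun_prop)
    (fun z _ => hg.differentiable one_ne_zero z)
  simpa using hparts

end IntegralCalculus

section Plane

/-- The divergence of the planar vector field `(a, b)`. -/
noncomputable def planarDiv (a b : ℝ → ℝ → ℝ) (x y : ℝ) : ℝ :=
  deriv (fun s => a s y) x + deriv (fun s => b x s) y

-- If `g` is not integrable, both integrals take the junk value `0`.
theorem integral_add_planarDiv {a b : ℝ → ℝ → ℝ}
    (ha : ContDiff ℝ 1 fun z : ℝ × ℝ => a z.1 z.2) (hb : ContDiff ℝ 1 fun z : ℝ × ℝ => b z.1 z.2)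
    {K : Set (ℝ × ℝ)} (hK : IsCompact K) (haK : ∀ x y, (x, y) ∉ K → a x y = 0)
    (hbK : ∀ x y, (x, y) ∉ K → b x y = 0) (g : ℝ × ℝ → ℝ) :
    ∫ z : ℝ × ℝ, (g z + planarDiv a b z.1 z.2) = ∫ z, g z := by
  have hac : HasCompactSupport fun z : ℝ × ℝ => a z.1 z.2 :=
    HasCompactSupport.intro hK fun z hz => haK z.1 z.2 hz
  have hbc : HasCompactSupport fun z : ℝ × ℝ => b z.1 z.2 :=
    HasCompactSupport.intro hK fun z hz => hbK z.1 z.2 hz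
  have hdiv : (fun z : ℝ × ℝ => planarDiv a b z.1 z.2) = fun z =>
      fderiv ℝ (fun z : ℝ × ℝ => a z.1 z.2) z (1, 0) +
        fderiv ℝ (fun z : ℝ × ℝ => b z.1 z.2) z (0, 1) := by
    funext ⟨x, y⟩
    rw [← (hasDerivAt_fst_slice (ha.differentiable one_ne_zero (x, y))).deriv,
      ← (hasDerivAt_snd_slice (hb.differentiable one_ne_zero (x, y))).deriv, planarDiv]
  have hdiv_int : Integrable fun z : ℝ × ℝ => planarDiv a b z.1 z.2 :=
    hdiv ▸ (integrable_fderiv_apply ha hac _).add (integrable_fderiv_apply hb hbc _)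
  have hdiv_zero : ∫ z : ℝ × ℝ, planarDiv a b z.1 z.2 = 0 := by
    rw [hdiv, integral_add (integrable_fderiv_apply ha hac _) (integrable_fderiv_apply hb hbc _),
      integral_fderiv_apply_eq_zero ha hac, integral_fderiv_apply_eq_zero hb hbc, add_zero]
  by_cases hg : Integrable g
  · rw [integral_add hg hdiv_int, hdiv_zero, add_zero]
  · rw [integral_undef hg, integral_undef]
    exact fun hsum => hg ((integrable_add_iff_integrable_left hdiv_int).1 hsum)

end Plane

/-- The field `f t x y` is continuously differentiable in time and space on `J × ℝ²`, with
one-sided time derivatives at the endpoints belonging to `J`. -/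
def IsC1Field (J : Set ℝ) (f : ℝ → ℝ → ℝ → ℝ) : Prop :=
  ContDiffOn ℝ 1 (fun q : ℝ × ℝ × ℝ => f q.1 q.2.1 q.2.2) (J ×ˢ univ)

namespace IsC1Field

variable {J : Set ℝ} {f g : ℝ → ℝ → ℝ → ℝ} {t : ℝ}

theorem add (hf : IsC1Field J f) (hg : IsC1Field J g) :
    IsC1Field J fun t x y => f t x y + g t x y :=
  ContDiffOn.add hf hg

theorem mul (hf : IsC1Field J f) (hg : IsC1Field J g) :
    IsC1Field J fun t x y => f t x y * g t x y :=
  ContDiffOn.mul hf hg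

theorem of_contDiff {g : ℝ → ℝ → ℝ} (hg : ContDiff ℝ 1 fun z : ℝ × ℝ => g z.1 z.2) :
    IsC1Field J fun _ => g :=
  (hg.comp contDiff_snd).contDiffOn

theorem contDiff (hf : IsC1Field J f) (ht : t ∈ J) : ContDiff ℝ 1 fun z : ℝ × ℝ => f t z.1 z.2 :=
  contDiff_slice hf ht

theorem hasDerivWithinAt (hf : IsC1Field J f) (ht : t ∈ J) (x y : ℝ) :
    HasDerivWithinAt (fun s => f s x y) (derivWithin (fun s => f s x y) J t) J t :=
  (hasDerivWithinAt_fst_slice (hf.differentiableOn one_ne_zero (t, x, y)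
    ⟨ht, mem_univ _⟩)).differentiableWithinAt.hasDerivWithinAt

theorem hasDerivAt_fst (hf : IsC1Field J f) (ht : t ∈ J) (x y : ℝ) :
    HasDerivAt (fun s => f t s y) (deriv (fun s => f t s y) x) x :=
  (hasDerivAt_fst_slice
    ((hf.contDiff ht).differentiable one_ne_zero (x, y))).differentiableAt.hasDerivAt

theorem hasDerivAt_snd (hf : IsC1Field J f) (ht : t ∈ J) (x y : ℝ) :
    HasDerivAt (fun s => f t x s) (deriv (fun s => f t x s) y) y :=
  (hasDerivAt_snd_slice
    ((hf.contDiff ht).differentiable one_ne_zero (x, y))).differentiableAt.hasDerivAt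

end IsC1Field

section MaterialDerivative

/-- The material derivative `D/Dt = ∂ₜ + u ∂ₓ + v ∂ᵧ` along the velocity `(u, v)`; the time
derivative is taken within the time interval `J`. -/
noncomputable def materialDeriv (J : Set ℝ) (u v f : ℝ → ℝ → ℝ → ℝ) (t x y : ℝ) : ℝ :=
  derivWithin (fun s => f s x y) J t + u t x y * deriv (fun s => f t s y) x +
    v t x y * deriv (fun s => f t x s) y

variable {J : Set ℝ} {u v f g : ℝ → ℝ → ℝ → ℝ} {t : ℝ}

theorem materialDeriv_add (hJd : UniqueDiffOn ℝ J) (hf : IsC1Field J f) (hg : IsC1Field J g)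
    (ht : t ∈ J) (x y : ℝ) :
    materialDeriv J u v (fun t x y => f t x y + g t x y) t x y =
      materialDeriv J u v f t x y + materialDeriv J u v g t x y := by
  unfold materialDeriv
  rw [((hf.hasDerivWithinAt ht x y).fun_add (hg.hasDerivWithinAt ht x y)).derivWithin (hJd t ht),
    ((hf.hasDerivAt_fst ht x y).fun_add (hg.hasDerivAt_fst ht x y)).deriv,
    ((hf.hasDerivAt_snd ht x y).fun_add (hg.hasDerivAt_snd ht x y)).deriv]
  ring

theorem materialDeriv_mul (hJd : UniqueDiffOn ℝ J) (hf : IsC1Field J f) (hg : IsC1Field J g)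
    (ht : t ∈ J) (x y : ℝ) :
    materialDeriv J u v (fun t x y => f t x y * g t x y) t x y =
      materialDeriv J u v f t x y * g t x y + f t x y * materialDeriv J u v g t x y := by
  unfold materialDeriv
  rw [((hf.hasDerivWithinAt ht x y).fun_mul (hg.hasDerivWithinAt ht x y)).derivWithin (hJd t ht),
    ((hf.hasDerivAt_fst ht x y).fun_mul (hg.hasDerivAt_fst ht x y)).deriv,
    ((hf.hasDerivAt_snd ht x y).fun_mul (hg.hasDerivAt_snd ht x y)).deriv]
  ring

theorem materialDeriv_of_time_independent (h : ℝ → ℝ → ℝ) (x y : ℝ) :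
    materialDeriv J u v (fun _ => h) t x y =
      u t x y * deriv (fun s => h s y) x + v t x y * deriv (fun s => h x s) y := by
  simp only [materialDeriv, derivWithin_fun_const, Pi.zero_apply, zero_add]

end MaterialDerivative

/-- A `C¹` planar flow of a fluid of density `ρ` and velocity `(u, v)` that conserves mass during
the time interval `J`, the fluid being contained in the fixed set `K`. -/
structure IsMassConservingFlow (J : Set ℝ) (K : Set (ℝ × ℝ)) (ρ u v : ℝ → ℝ → ℝ → ℝ) : Prop where
  density_c1 : IsC1Field J ρ
  velocity_fst_c1 : IsC1Field J u
  velocity_snd_c1 : IsC1Field J v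
  density_eq_zero : ∀ t ∈ J, ∀ x y, (x, y) ∉ K → ρ t x y = 0
  continuity : ∀ t ∈ J, ∀ x y, derivWithin (fun s => ρ s x y) J t +
    deriv (fun s => ρ t s y * u t s y) x + deriv (fun s => ρ t x s * v t x s) y = 0

/-- A mass conserving flow driven by the pressure `p` in a plane rotating with Coriolis parameter
`l`. The momentum equation is imposed, but no equation of state or evolution law for `p`. -/
structure IsRotatingFlow (l : ℝ) (J : Set ℝ) (K : Set (ℝ × ℝ)) (ρ u v p : ℝ → ℝ → ℝ → ℝ) : Prop
    extends IsMassConservingFlow J K ρ u v where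
  pressure_c1 : IsC1Field J p
  pressure_eq_zero : ∀ t ∈ J, ∀ x y, (x, y) ∉ K → p t x y = 0
  momentum_fst : ∀ t ∈ J, ∀ x y,
    ρ t x y * (materialDeriv J u v u t x y + l * -v t x y) + deriv (fun s => p t s y) x = 0
  momentum_snd : ∀ t ∈ J, ∀ x y,
    ρ t x y * (materialDeriv J u v v t x y + l * u t x y) + deriv (fun s => p t x s) y = 0

namespace IsMassConservingFlow

variable {J : Set ℝ} {K : Set (ℝ × ℝ)} {ρ u v f : ℝ → ℝ → ℝ → ℝ} {t : ℝ}

theorem density_mul_materialDeriv (h : IsMassConservingFlow J K ρ u v)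
    (hJd : UniqueDiffOn ℝ J) (hf : IsC1Field J f) (ht : t ∈ J) (x y : ℝ) :
    ρ t x y * materialDeriv J u v f t x y =
      derivWithin (fun s => ρ s x y * f s x y) J t +
        planarDiv (fun x y => ρ t x y * u t x y * f t x y)
          (fun x y => ρ t x y * v t x y * f t x y) x y := by
  have hρu := (h.density_c1.mul h.velocity_fst_c1).hasDerivAt_fst ht x y
  have hρv := (h.density_c1.mul h.velocity_snd_c1).hasDerivAt_snd ht x y
  rw [planarDiv, materialDeriv,
    ((h.density_c1.hasDerivWithinAt ht x y).fun_mul (hf.hasDerivWithinAt ht x y)).derivWithin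
      (hJd t ht),
    (hρu.fun_mul (hf.hasDerivAt_fst ht x y)).deriv,
    (hρv.fun_mul (hf.hasDerivAt_snd ht x y)).deriv]
  linear_combination -f t x y * h.continuity t ht x y

theorem hasDerivWithinAt_integral_density_mul
    (h : IsMassConservingFlow J K ρ u v) (hJ : Convex ℝ J) (hJd : UniqueDiffOn ℝ J)
    (hK : IsCompact K) (hf : IsC1Field J f) (ht : t ∈ J) :
    HasDerivWithinAt (fun τ => ∫ z : ℝ × ℝ, ρ τ z.1 z.2 * f τ z.1 z.2)
      (∫ z : ℝ × ℝ, ρ t z.1 z.2 * materialDeriv J u v f t z.1 z.2) J t := by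
  simp only [h.density_mul_materialDeriv hJd hf ht]
  rw [integral_add_planarDiv (((h.density_c1.mul h.velocity_fst_c1).mul hf).contDiff ht)
    (((h.density_c1.mul h.velocity_snd_c1).mul hf).contDiff ht) hK
    (fun x y hxy => by simp [h.density_eq_zero t ht x y hxy])
    (fun x y hxy => by simp [h.density_eq_zero t ht x y hxy])]
  exact hasDerivWithinAt_integral_of_contDiffOn hJ hJd hK (h.density_c1.mul hf)
    (fun s hs z hz => by simp [h.density_eq_zero s hs z.1 z.2 hz]) ht

theorem integrable_density_mul (h : IsMassConservingFlow J K ρ u v)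
    (hK : IsCompact K) (ht : t ∈ J) {g : ℝ × ℝ → ℝ} (hg : Continuous g) :
    Integrable fun z : ℝ × ℝ => ρ t z.1 z.2 * g z :=
  ((h.density_c1.contDiff ht).continuous.mul hg).integrable_of_hasCompactSupport
    (HasCompactSupport.intro hK fun z hz => by simp [h.density_eq_zero t ht z.1 z.2 hz])

theorem hasDerivWithinAt_momentOfInertia (h : IsMassConservingFlow J K ρ u v)
    (hJ : Convex ℝ J) (hJd : UniqueDiffOn ℝ J) (hK : IsCompact K) (ht : t ∈ J) :
    HasDerivWithinAt (fun τ => (1 / 2) * ∫ z : ℝ × ℝ, ρ τ z.1 z.2 * (z.1 ^ 2 + z.2 ^ 2))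
      (∫ z : ℝ × ℝ, ρ t z.1 z.2 * (u t z.1 z.2 * z.1 + v t z.1 z.2 * z.2)) J t := by
  have htransport := h.hasDerivWithinAt_integral_density_mul hJ hJd hK
    (.of_contDiff (g := fun x y => x ^ 2 + y ^ 2) (by fun_prop)) ht
  refine (htransport.const_mul (1 / 2)).congr_deriv ?_
  rw [← integral_const_mul]
  refine integral_congr_ae (.of_forall fun z => ?_)
  simp only [materialDeriv_of_time_independent, differentiableAt_fun_id, DifferentiableAt.fun_pow,
    differentiableAt_const, deriv_fun_add, deriv_fun_pow, deriv_id'', deriv_const']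
  ring

end IsMassConservingFlow

namespace IsRotatingFlow

variable {l : ℝ} {J : Set ℝ} {K : Set (ℝ × ℝ)} {ρ u v p : ℝ → ℝ → ℝ → ℝ} {t : ℝ}

theorem density_mul_materialDeriv_velocity_dot (h : IsRotatingFlow l J K ρ u v p)
    (hJd : UniqueDiffOn ℝ J) {X Y : ℝ → ℝ → ℝ} (hX : ContDiff ℝ 1 fun z : ℝ × ℝ => X z.1 z.2)
    (hY : ContDiff ℝ 1 fun z : ℝ × ℝ => Y z.1 z.2) (ht : t ∈ J) (x y : ℝ) :
    ρ t x y * materialDeriv J u v (fun t x y => u t x y * X x y + v t x y * Y x y) t x y +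
        planarDiv (fun x y => p t x y * X x y) (fun x y => p t x y * Y x y) x y =
      p t x y * planarDiv X Y x y +
        ρ t x y * (u t x y * materialDeriv J u v (fun _ => X) t x y +
          v t x y * materialDeriv J u v (fun _ => Y) t x y) -
        l * (ρ t x y * (u t x y * Y x y - v t x y * X x y)) := by
  have hX' : IsC1Field J fun _ => X := .of_contDiff hX
  have hY' : IsC1Field J fun _ => Y := .of_contDiff hY
  rw [materialDeriv_add hJd (h.velocity_fst_c1.mul hX') (h.velocity_snd_c1.mul hY') ht,
    materialDeriv_mul hJd h.velocity_fst_c1 hX' ht, materialDeriv_mul hJd h.velocity_snd_c1 hY' ht,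
    planarDiv, planarDiv,
    ((h.pressure_c1.hasDerivAt_fst ht x y).fun_mul (hX'.hasDerivAt_fst ht x y)).deriv,
    ((h.pressure_c1.hasDerivAt_snd ht x y).fun_mul (hY'.hasDerivAt_snd ht x y)).deriv]
  linear_combination X x y * h.momentum_fst t ht x y + Y x y * h.momentum_snd t ht x y

theorem hasDerivWithinAt_integral_momentum_dot (h : IsRotatingFlow l J K ρ u v p)
    (hJ : Convex ℝ J) (hJd : UniqueDiffOn ℝ J) (hK : IsCompact K) {X Y : ℝ → ℝ → ℝ}
    (hX : ContDiff ℝ 1 fun z : ℝ × ℝ => X z.1 z.2)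
    (hY : ContDiff ℝ 1 fun z : ℝ × ℝ => Y z.1 z.2) (ht : t ∈ J) :
    HasDerivWithinAt
      (fun τ => ∫ z : ℝ × ℝ,
        ρ τ z.1 z.2 * (u τ z.1 z.2 * X z.1 z.2 + v τ z.1 z.2 * Y z.1 z.2))
      (∫ z : ℝ × ℝ, (p t z.1 z.2 * planarDiv X Y z.1 z.2 +
        ρ t z.1 z.2 * (u t z.1 z.2 * materialDeriv J u v (fun _ => X) t z.1 z.2 +
          v t z.1 z.2 * materialDeriv J u v (fun _ => Y) t z.1 z.2) -
        l * (ρ t z.1 z.2 * (u t z.1 z.2 * Y z.1 z.2 - v t z.1 z.2 * X z.1 z.2)))) J t := by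
  have hX' : IsC1Field J fun _ => X := .of_contDiff hX
  have hY' : IsC1Field J fun _ => Y := .of_contDiff hY
  simp only [← h.density_mul_materialDeriv_velocity_dot hJd hX hY ht]
  rw [integral_add_planarDiv ((h.pressure_c1.mul hX').contDiff ht)
    ((h.pressure_c1.mul hY').contDiff ht) hK
    (fun x y hxy => by simp [h.pressure_eq_zero t ht x y hxy])
    (fun x y hxy => by simp [h.pressure_eq_zero t ht x y hxy])]
  exact h.hasDerivWithinAt_integral_density_mul hJ hJd hK
    ((h.velocity_fst_c1.mul hX').add (h.velocity_snd_c1.mul hY')) ht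

theorem hasDerivWithinAt_angularMomentum (h : IsRotatingFlow l J K ρ u v p)
    (hJ : Convex ℝ J) (hJd : UniqueDiffOn ℝ J) (hK : IsCompact K) (ht : t ∈ J) :
    HasDerivWithinAt
      (fun τ => ∫ z : ℝ × ℝ, ρ τ z.1 z.2 * (u τ z.1 z.2 * z.2 - v τ z.1 z.2 * z.1))
      (l * ∫ z : ℝ × ℝ, ρ t z.1 z.2 * (u t z.1 z.2 * z.1 + v t z.1 z.2 * z.2)) J t := by
  have hdot := h.hasDerivWithinAt_integral_momentum_dot hJ hJd hK
    (X := fun _ y => y) (Y := fun x _ => -x) (by fun_prop) (by fun_prop) ht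
  simp only [mul_neg, ← sub_eq_add_neg] at hdot
  refine hdot.congr_deriv ?_
  rw [← integral_const_mul]
  refine integral_congr_ae (.of_forall fun z => ?_)
  simp only [planarDiv, materialDeriv_of_time_independent, deriv_id'', deriv_neg'', deriv_const',
    mul_one, mul_zero, add_zero, zero_add]
  ring

theorem hasDerivWithinAt_radialMomentum (h : IsRotatingFlow l J K ρ u v p)
    (hJ : Convex ℝ J) (hJd : UniqueDiffOn ℝ J) (hK : IsCompact K) (ht : t ∈ J) :
    HasDerivWithinAt
      (fun τ => ∫ z : ℝ × ℝ, ρ τ z.1 z.2 * (u τ z.1 z.2 * z.1 + v τ z.1 z.2 * z.2))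
      ((2 * ∫ z : ℝ × ℝ, p t z.1 z.2) +
        (∫ z : ℝ × ℝ, ρ t z.1 z.2 * (u t z.1 z.2 ^ 2 + v t z.1 z.2 ^ 2)) -
        l * ∫ z : ℝ × ℝ, ρ t z.1 z.2 * (u t z.1 z.2 * z.2 - v t z.1 z.2 * z.1)) J t := by
  have hu := (h.velocity_fst_c1.contDiff ht).continuous
  have hv := (h.velocity_snd_c1.contDiff ht).continuous
  have hp : Integrable fun z : ℝ × ℝ => p t z.1 z.2 :=
    (h.pressure_c1.contDiff ht).continuous.integrable_of_hasCompactSupport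
      (HasCompactSupport.intro hK fun z hz => h.pressure_eq_zero t ht z.1 z.2 hz)
  have hkinetic : Integrable fun z : ℝ × ℝ => ρ t z.1 z.2 * (u t z.1 z.2 ^ 2 + v t z.1 z.2 ^ 2) :=
    h.integrable_density_mul hK ht (by fun_prop)
  have hsum : Integrable fun z : ℝ × ℝ =>
      2 * p t z.1 z.2 + ρ t z.1 z.2 * (u t z.1 z.2 ^ 2 + v t z.1 z.2 ^ 2) :=
    (hp.const_mul 2).add hkinetic
  have hangular :
      Integrable fun z : ℝ × ℝ => ρ t z.1 z.2 * (u t z.1 z.2 * z.2 - v t z.1 z.2 * z.1) :=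
    h.integrable_density_mul hK ht (by fun_prop)
  refine (h.hasDerivWithinAt_integral_momentum_dot hJ hJd hK
    (X := fun x _ => x) (Y := fun _ y => y) (by fun_prop) (by fun_prop) ht).congr_deriv ?_
  rw [← integral_const_mul, ← integral_const_mul, ← integral_add (hp.const_mul 2) hkinetic,
    ← integral_sub hsum (hangular.const_mul l)]
  refine integral_congr_ae (.of_forall fun z => ?_)
  simp only [planarDiv, materialDeriv_of_time_independent, deriv_id'', deriv_const', mul_one,
    mul_zero, add_zero, zero_add]
  ring

end IsRotatingFlow

theorem stmt_19_general {l : ℝ} {J : Set ℝ} (hJ : Convex ℝ J) (hJd : UniqueDiffOn ℝ J)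
    {K : Set (ℝ × ℝ)} (hK : IsCompact K) {ρ u₁ u₂ p : ℝ → ℝ → ℝ → ℝ}
    (h : IsRotatingFlow l J K ρ u₁ u₂ p) {t : ℝ} (ht : t ∈ J) :
    HasDerivWithinAt
        (fun τ => (1 / 2) * ∫ z : ℝ × ℝ, ρ τ z.1 z.2 * (z.1 ^ 2 + z.2 ^ 2))
        (∫ z : ℝ × ℝ, ρ t z.1 z.2 * (u₁ t z.1 z.2 * z.1 + u₂ t z.1 z.2 * z.2)) J t ∧
      HasDerivWithinAt
        (fun τ => ∫ z : ℝ × ℝ, ρ τ z.1 z.2 * (u₁ τ z.1 z.2 * z.2 - u₂ τ z.1 z.2 * z.1))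
        (l * ∫ z : ℝ × ℝ, ρ t z.1 z.2 * (u₁ t z.1 z.2 * z.1 + u₂ t z.1 z.2 * z.2)) J t ∧
      HasDerivWithinAt
        (fun τ => ∫ z : ℝ × ℝ, ρ τ z.1 z.2 * (u₁ τ z.1 z.2 * z.1 + u₂ τ z.1 z.2 * z.2))
        ((2 * ∫ z : ℝ × ℝ, p t z.1 z.2) +
          (∫ z : ℝ × ℝ, ρ t z.1 z.2 * (u₁ t z.1 z.2 ^ 2 + u₂ t z.1 z.2 ^ 2)) -
          l * ∫ z : ℝ × ℝ, ρ t z.1 z.2 * (u₁ t z.1 z.2 * z.2 - u₂ t z.1 z.2 * z.1)) J t :=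
  ⟨h.hasDerivWithinAt_momentOfInertia hJ hJd hK ht,
    h.hasDerivWithinAt_angularMomentum hJ hJd hK ht,
    h.hasDerivWithinAt_radialMomentum hJ hJd hK ht⟩

/-- Virial identities for classical solutions of the 2D rotating
compressible Euler system on `[0,T) × ℝ²` (with `0 < T ≤ ∞`), with `ρ(t,·)` and
`p(t,·)` supported in a fixed compact set `K`:
`G' = F₁`, `F₂' = l F₁`, `F₁' = 2(γ−1)E_p + 2E_k − l F₂`, where
`G = (1/2)∫ρ|x|²`, `F₁ = ∫ρ(U·x)`, `F₂ = ∫ρ(U·x⊥)`, `E_k = (1/2)∫ρ|U|²`,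
`E_p = (1/(γ−1))∫p`. -/
theorem stmt_19 (γ l : ℝ) (hγ : 1 < γ) (J : Set ℝ)
    (hJ : (∃ T : ℝ, 0 < T ∧ J = Set.Ico 0 T) ∨ J = Set.Ici 0)
    (ρ u₁ u₂ p : ℝ → ℝ → ℝ → ℝ)
    (hρreg : ContDiffOn ℝ 1 (fun q : ℝ × ℝ × ℝ => ρ q.1 q.2.1 q.2.2)
      (J ×ˢ (Set.univ : Set (ℝ × ℝ))))
    (hu₁reg : ContDiffOn ℝ 1 (fun q : ℝ × ℝ × ℝ => u₁ q.1 q.2.1 q.2.2)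
      (J ×ˢ (Set.univ : Set (ℝ × ℝ))))
    (hu₂reg : ContDiffOn ℝ 1 (fun q : ℝ × ℝ × ℝ => u₂ q.1 q.2.1 q.2.2)
      (J ×ˢ (Set.univ : Set (ℝ × ℝ))))
    (hpreg : ContDiffOn ℝ 1 (fun q : ℝ × ℝ × ℝ => p q.1 q.2.1 q.2.2)
      (J ×ˢ (Set.univ : Set (ℝ × ℝ))))
    (K : Set (ℝ × ℝ)) (hK : IsCompact K)
    (hρsupp : ∀ t x y : ℝ, (x, y) ∉ K → ρ t x y = 0)
    (hpsupp : ∀ t x y : ℝ, (x, y) ∉ K → p t x y = 0)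
    -- momentum equation, first component (L·U = (−u₂, u₁)):
    (hmom₁ : ∀ t ∈ J, ∀ x y : ℝ,
      ρ t x y * (derivWithin (fun s => u₁ s x y) J t +
          u₁ t x y * deriv (fun s => u₁ t s y) x +
          u₂ t x y * deriv (fun s => u₁ t x s) y + l * (-(u₂ t x y))) +
        deriv (fun s => p t s y) x = 0)
    -- momentum equation, second component:
    (hmom₂ : ∀ t ∈ J, ∀ x y : ℝ,
      ρ t x y * (derivWithin (fun s => u₂ s x y) J t +
          u₁ t x y * deriv (fun s => u₂ t s y) x +
          u₂ t x y * deriv (fun s => u₂ t x s) y + l * u₁ t x y) +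
        deriv (fun s => p t x s) y = 0)
    -- continuity equation:
    (hcont : ∀ t ∈ J, ∀ x y : ℝ,
      derivWithin (fun s => ρ s x y) J t +
        deriv (fun s => ρ t s y * u₁ t s y) x +
        deriv (fun s => ρ t x s * u₂ t x s) y = 0)
    -- pressure equation:
    (hpres : ∀ t ∈ J, ∀ x y : ℝ,
      derivWithin (fun s => p s x y) J t +
        u₁ t x y * deriv (fun s => p t s y) x +
        u₂ t x y * deriv (fun s => p t x s) y +
        γ * p t x y * (deriv (fun s => u₁ t s y) x + deriv (fun s => u₂ t x s) y) = 0) :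
    ∀ t ∈ J,
      HasDerivWithinAt
        (fun τ => (1 / 2) * ∫ z : ℝ × ℝ, ρ τ z.1 z.2 * (z.1 ^ 2 + z.2 ^ 2))
        (∫ z : ℝ × ℝ, ρ t z.1 z.2 * (u₁ t z.1 z.2 * z.1 + u₂ t z.1 z.2 * z.2)) J t ∧
      HasDerivWithinAt
        (fun τ => ∫ z : ℝ × ℝ, ρ τ z.1 z.2 * (u₁ τ z.1 z.2 * z.2 - u₂ τ z.1 z.2 * z.1))
        (l * ∫ z : ℝ × ℝ, ρ t z.1 z.2 * (u₁ t z.1 z.2 * z.1 + u₂ t z.1 z.2 * z.2)) J t ∧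
      HasDerivWithinAt
        (fun τ => ∫ z : ℝ × ℝ, ρ τ z.1 z.2 * (u₁ τ z.1 z.2 * z.1 + u₂ τ z.1 z.2 * z.2))
        (2 * (γ - 1) * ((1 / (γ - 1)) * ∫ z : ℝ × ℝ, p t z.1 z.2) +
          2 * ((1 / 2) * ∫ z : ℝ × ℝ,
            ρ t z.1 z.2 * ((u₁ t z.1 z.2) ^ 2 + (u₂ t z.1 z.2) ^ 2)) -
          l * ∫ z : ℝ × ℝ,
            ρ t z.1 z.2 * (u₁ t z.1 z.2 * z.2 - u₂ t z.1 z.2 * z.1)) J t := by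
  obtain ⟨hJ_convex, hJ_uniqueDiff⟩ : Convex ℝ J ∧ UniqueDiffOn ℝ J := by
    rcases hJ with ⟨T, -, rfl⟩ | rfl
    exacts [⟨convex_Ico 0 T, uniqueDiffOn_Ico 0 T⟩, ⟨convex_Ici 0, uniqueDiffOn_Ici 0⟩]
  have hflow : IsRotatingFlow l J K ρ u₁ u₂ p :=
    ⟨⟨hρreg, hu₁reg, hu₂reg, fun t _ => hρsupp t, hcont⟩, hpreg, fun t _ => hpsupp t,
      hmom₁, hmom₂⟩
  intro t ht
  obtain ⟨hG, hF₂, hF₁⟩ := stmt_19_general hJ_convex hJ_uniqueDiff hK hflow ht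
  have hγ_ne : γ - 1 ≠ 0 := (sub_pos.2 hγ).ne'
  exact ⟨hG, hF₂, hF₁.congr_deriv (by field_simp)⟩
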